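/- arXiv:1210.8303 — 2 statements merged into one kernel-verified Lean document; each statement's English description precedes it below -/
import Mathlib

section
/- A rooted tree T on the vertex set of a flow graph G has both the parent property and the sibling property if and only if T is the dominator tree D of G. -/
variable {V : Type*}

/-- `IsWalk A u v p`: `p` is a path from `u` to `v` in the digraph with arc
relation `A`, listing all of its vertices in order. -/
def IsWalk (A : V → V → Prop) (u v : V) (p : List V) : Prop :=
  p.Chain' A ∧ p.head? = some u ∧ p.getLast? = some v

/-- A flow graph: a directed graph with arc relation `A` and start vertex `s`
such that every vertex is reachable from `s` and no arc enters `s`. -/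
structure FlowGraph (V : Type*) where
  A : V → V → Prop
  s : V
  reach : ∀ v : V, ∃ p : List V, IsWalk A s v p
  no_enter : ∀ v : V, ¬ A v s

/-- `DomOn A s v w`: `v` lies on every path from `s` to `w` in the digraph with
arc relation `A`. -/
def DomOn (A : V → V → Prop) (s v w : V) : Prop :=
  ∀ p : List V, IsWalk A s w p → v ∈ p

/-- `v` dominates `w` in the flow graph `G`. -/
def FlowGraph.Dom (G : FlowGraph V) (v w : V) : Prop :=
  DomOn G.A G.s v w

/-- A rooted tree on vertex set `V`, given by a parent function: the root is a
fixed point of the parent function, and iterating the parent function from any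
vertex eventually reaches the root. -/
structure ParentTree (V : Type*) where
  parent : V → V
  root : V
  parent_root : parent root = root
  reaches_root : ∀ v : V, ∃ n : ℕ, parent^[n] v = root

/-- `T.Anc x y`: `x` is an ancestor of `y` in the rooted tree `T` (every vertex
is an ancestor of itself). -/
def ParentTree.Anc (T : ParentTree V) (x y : V) : Prop :=
  ∃ n : ℕ, T.parent^[n] y = x

/-- `T` has the parent property with respect to `G`: for every arc `(v, w)`,
the parent of `w` is an ancestor of `v` in `T`. -/
def ParentProperty (G : FlowGraph V) (T : ParentTree V) : Prop :=
  ∀ v w : V, G.A v w → T.Anc (T.parent w) v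

/-- The sibling property with respect to an arbitrary arc relation `A` with
start vertex `s`: no non-root vertex dominates a distinct vertex with the same
parent. -/
def SiblingPropertyOn (A : V → V → Prop) (s : V) (T : ParentTree V) : Prop :=
  ∀ v w : V, v ≠ T.root → w ≠ T.root → v ≠ w → T.parent v = T.parent w →
    ¬ DomOn A s v w

/-- `T` has the sibling property with respect to the flow graph `G`. -/
def SiblingProperty (G : FlowGraph V) (T : ParentTree V) : Prop :=
  SiblingPropertyOn G.A G.s T

/-- `T` is the dominator tree of the digraph with arc relation `A` and start
vertex `s`: `T` is rooted at `s`, and the parent of every vertex `v ≠ s` is its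
immediate dominator, i.e. a strict dominator of `v` that is dominated by every
strict dominator of `v`. -/
def IsDomTreeOn (A : V → V → Prop) (s : V) (T : ParentTree V) : Prop :=
  T.root = s ∧ ∀ v : V, v ≠ s →
    DomOn A s (T.parent v) v ∧ T.parent v ≠ v ∧
    ∀ u : V, DomOn A s u v → u ≠ v → DomOn A s u (T.parent v)

/-- `T` is the dominator tree of the flow graph `G`. -/
def IsDomTree (G : FlowGraph V) (T : ParentTree V) : Prop :=
  IsDomTreeOn G.A G.s T

/-- `ord` is (the numbering of) a preorder of the rooted tree `T`: an injective
numbering of the vertices such that for every vertex `v` the descendants of `v`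
are ordered consecutively, with `v` first. -/
def IsTreePreorder (T : ParentTree V) (ord : V → ℕ) : Prop :=
  Function.Injective ord ∧
  (∀ v x : V, T.Anc v x → ord v ≤ ord x) ∧
  (∀ v x y z : V, T.Anc v x → T.Anc v z → ord x ≤ ord y → ord y ≤ ord z →
    T.Anc v y)

/-- A preorder `ord` of `T` is low-high on the digraph with arc relation `A`
and start vertex `s`: for every `v ≠ s`, either `(t(v), v)` is an arc, or there
are arcs `(u, v)` and `(w, v)` with `u < v < w` in the order and `w` not a
descendant of `v` in `T`. -/
def LowHighOn (A : V → V → Prop) (s : V) (T : ParentTree V) (ord : V → ℕ) :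
    Prop :=
  IsTreePreorder T ord ∧
  ∀ v : V, v ≠ s → (A (T.parent v) v ∨
    ∃ u w : V, A u v ∧ A w v ∧ ord u < ord v ∧ ord v < ord w ∧ ¬ T.Anc v w)

/-- A low-high order of `T` on the flow graph `G`. -/
def LowHigh (G : FlowGraph V) (T : ParentTree V) (ord : V → ℕ) : Prop :=
  LowHighOn G.A G.s T ord

/-- `B` is (the arc relation of) a spanning tree of `G` rooted at `s`: a
subgraph of `G` in which no arc enters `s`, every vertex other than `s` has
exactly one entering arc, and every vertex is reachable from `s`. -/
def IsSpanningTree (G : FlowGraph V) (B : V → V → Prop) : Prop :=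
  (∀ u v : V, B u v → G.A u v) ∧
  (∀ v : V, ¬ B v G.s) ∧
  (∀ v : V, v ≠ G.s → ∃! u : V, B u v) ∧
  (∀ v : V, ∃ p : List V, IsWalk B G.s v p)

/-- Spanning trees `B` and `R` of `G` rooted at `s` are independent: for every
vertex `v`, the paths from `s` to `v` in `B` and in `R` have in common only
dominators of `v`. -/
def Independent (G : FlowGraph V) (B R : V → V → Prop) : Prop :=
  ∀ v : V, ∀ p q : List V, IsWalk B G.s v p → IsWalk R G.s v q →
    ∀ x : V, x ∈ p → x ∈ q → G.Dom x v

/-- Spanning trees `B` and `R` of `G` rooted at `s` are strongly independent: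
for every pair of vertices `v`, `w`, either the path from `s` to `v` in `B` and
the path from `s` to `w` in `R` have in common only common dominators of `v`
and `w`, or the same holds with the roles of `B` and `R` exchanged. -/
def StronglyIndependent (G : FlowGraph V) (B R : V → V → Prop) : Prop :=
  ∀ v w : V,
    (∀ p q : List V, IsWalk B G.s v p → IsWalk R G.s w q →
      ∀ x : V, x ∈ p → x ∈ q → G.Dom x v ∧ G.Dom x w) ∨
    (∀ p q : List V, IsWalk R G.s v p → IsWalk B G.s w q →
      ∀ x : V, x ∈ p → x ∈ q → G.Dom x v ∧ G.Dom x w)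

/-- `IsDerivedArcOf G T v b a`: `(a, b)` is the derived arc of the arc `(v, b)`
of `G` with respect to `T`: `b` is not an ancestor of `v` in `T`, and `a = v`
if `v` is the parent of `b`, while otherwise `a` is the sibling of `b` in `T`
that is an ancestor of `v`. -/
def IsDerivedArcOf (G : FlowGraph V) (T : ParentTree V) (v b a : V) : Prop :=
  G.A v b ∧ ¬ T.Anc b v ∧
    ((v = T.parent b ∧ a = v) ∨
     (v ≠ T.parent b ∧ a ≠ T.root ∧ T.parent a = T.parent b ∧ T.Anc a v))

/-- The arc relation of the derived graph of `G` with respect to `T`. -/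
def DerivedArc (G : FlowGraph V) (T : ParentTree V) (a b : V) : Prop :=
  ∃ v : V, IsDerivedArcOf G T v b a

/-- `S` is the vertex set of a strongly connected subgraph of the digraph with
arc relation `A`. -/
def StronglyConnectedSet (A : V → V → Prop) (S : Set V) : Prop :=
  S.Nonempty ∧ ∀ u ∈ S, ∀ v ∈ S, ∃ p : List V,
    IsWalk A u v p ∧ ∀ x ∈ p, x ∈ S

/-- `G` is reducible: every strongly connected subgraph has a single entry
vertex, i.e. a vertex of the subgraph contained in every path from `s` to a
vertex of the subgraph. -/
def Reducible (G : FlowGraph V) : Prop :=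
  ∀ S : Set V, StronglyConnectedSet G.A S →
    ∃ v ∈ S, ∀ u ∈ S, ∀ p : List V, IsWalk G.A G.s u p → v ∈ p

/-- A digraph is acyclic if it has no cycle (a path from a vertex to itself
with at least one arc). -/
def Acyclic (A : V → V → Prop) : Prop :=
  ¬ ∃ (v : V) (p : List V), IsWalk A v v p ∧ 2 ≤ p.length

/-- `IsHighWalk A ν u v p`: `p` is a high path from `u` to `v`: a path all of
whose vertices other than `u` and `v` are greater (in the numbering `ν`) than
both `u` and `v`. -/
def IsHighWalk (A : V → V → Prop) (ν : V → ℕ) (u v : V) (p : List V) : Prop :=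
  IsWalk A u v p ∧ ∀ x ∈ p, x ≠ u → x ≠ v → ν u < ν x ∧ ν v < ν x

/-!
A dominator of `w` other than `w` dominates every predecessor of `w`. Induction along a path from
`s` therefore shows that domination is antisymmetric and that any two dominators of a vertex are
comparable.

The parent property forces every ancestor of `w` to lie on each path to `w`. With the sibling
property the converse holds: let `u` dominate `v`. By induction down the tree the parent of `u` is
an ancestor of `v`. If it is `v` itself, antisymmetry gives `u = v`. Otherwise its child towards `v`
also dominates `v`, so this child is comparable with its sibling `u`, and the sibling property
identifies the two. Hence ancestors and dominators coincide, which makes parents immediate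
dominators.

In the dominator tree, the parent of `w` dominates each predecessor of `w`, and following immediate
dominators upwards shows that dominators are ancestors; this is the parent property. A vertex that
dominated a sibling would dominate the common parent, contradicting antisymmetry.
-/

section Walk

variable {A : V → V → Prop} {u v w x : V} {p : List V}

theorem isWalk_singleton (A : V → V → Prop) (u : V) : IsWalk A u u [u] :=
  ⟨List.isChain_singleton u, rfl, rfl⟩

theorem IsWalk.concat (hp : IsWalk A u v p) (hvw : A v w) : IsWalk A u w (p ++ [w]) := by
  obtain ⟨hchain, hhead, hlast⟩ := hp
  refine ⟨hchain.append (List.isChain_singleton w) ?_, by simp [hhead], by simp⟩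
  simpa [hlast] using hvw

theorem IsWalk.concat_induction {motive : ∀ (v : V) (p : List V), IsWalk A u v p → Prop}
    (singleton : motive u [u] (isWalk_singleton A u))
    (concat : ∀ {v w : V} {p : List V} (hp : IsWalk A u v p) (hvw : A v w),
      motive v p hp → motive w (p ++ [w]) (hp.concat hvw))
    {v : V} {p : List V} (hp : IsWalk A u v p) : motive v p hp := by
  induction p using List.reverseRecOn generalizing v with
  | nil => simp [IsWalk] at hp
  | append_singleton p a ih =>
    obtain ⟨hchain, hhead, hlast⟩ := id hp
    obtain rfl : a = v := by simpa using hlast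
    rcases p.eq_nil_or_concat' with rfl | ⟨q, b, rfl⟩
    · obtain rfl : a = u := by simpa using hhead
      exact singleton
    · obtain ⟨hq, -, harc⟩ := List.isChain_append.1 hchain
      have hwalk : IsWalk A u b (q ++ [b]) := ⟨hq, by simpa using hhead, by simp⟩
      exact concat hwalk (harc b (by simp) a (by simp)) (ih hwalk)

theorem IsWalk.exists_prefix (hp : IsWalk A u v p) (hx : x ∈ p) :
    ∃ q, q <+: p ∧ IsWalk A u x q := by
  obtain ⟨hchain, hhead, -⟩ := hp
  obtain ⟨q, r, rfl⟩ := List.append_of_mem hx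
  have hprefix : q ++ [x] <+: q ++ x :: r := ⟨r, by simp⟩
  exact ⟨q ++ [x], hprefix, hchain.prefix hprefix, by simpa using hhead, by simp⟩

end Walk

section Domination

variable {A : V → V → Prop} {s u v w x y z : V}

theorem domOn_refl (A : V → V → Prop) (s v : V) : DomOn A s v v :=
  fun _ hp => List.mem_of_getLast? hp.2.2

theorem DomOn.eq_start (h : DomOn A s x s) : x = s :=
  List.mem_singleton.1 (h [s] (isWalk_singleton A s))

theorem DomOn.trans (hxy : DomOn A s x y) (hyz : DomOn A s y z) : DomOn A s x z := by
  intro p hp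
  obtain ⟨q, hqp, hq⟩ := hp.exists_prefix (hyz p hp)
  exact hqp.subset (hxy q hq)

theorem DomOn.of_arc (h : DomOn A s x w) (hne : x ≠ w) (hvw : A v w) : DomOn A s x v := by
  intro p hp
  simpa [hne] using h (p ++ [w]) (hp.concat hvw)

theorem DomOn.antisymm (hv : ∃ p, IsWalk A s v p) (huv : DomOn A s u v) (hvu : DomOn A s v u) :
    u = v := by
  by_contra hne
  -- Neither vertex can be the first of the two on a walk, so `u` dominates nothing reachable.
  have not_domOn : ∀ {y p}, IsWalk A s y p → ¬ DomOn A s u y := by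
    intro y p hp
    induction hp using IsWalk.concat_induction with
    | singleton =>
      intro hus
      obtain rfl := hus.eq_start
      exact hne hvu.eq_start.symm
    | @concat x y _ _ hxy ih =>
      intro huy
      by_cases hu : u = y
      · subst hu
        exact ih (huv.trans (hvu.of_arc (Ne.symm hne) hxy))
      · exact ih (huy.of_arc hu hxy)
  obtain ⟨p, hp⟩ := hv
  exact not_domOn hp huv

theorem DomOn.total (hv : ∃ p, IsWalk A s v p) (hxv : DomOn A s x v) (hyv : DomOn A s y v) :
    DomOn A s x y ∨ DomOn A s y x := by
  obtain ⟨p, hp⟩ := hv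
  induction hp using IsWalk.concat_induction with
  | singleton =>
    rw [hxv.eq_start, hyv.eq_start]
    exact Or.inl (domOn_refl A s s)
  | @concat v w _ _ hvw ih =>
    by_cases hxw : x = w
    · exact Or.inr (hxw ▸ hyv)
    by_cases hyw : y = w
    · exact Or.inl (hyw ▸ hxv)
    exact ih (hxv.of_arc hxw hvw) (hyv.of_arc hyw hvw)

end Domination

namespace ParentTree

variable {T : ParentTree V} {x y z v : V}

theorem anc_refl (T : ParentTree V) (v : V) : T.Anc v v :=
  ⟨0, rfl⟩

theorem anc_parent (T : ParentTree V) (v : V) : T.Anc (T.parent v) v :=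
  ⟨1, rfl⟩

theorem Anc.trans (hxy : T.Anc x y) (hyz : T.Anc y z) : T.Anc x z := by
  obtain ⟨m, rfl⟩ := hxy
  obtain ⟨n, rfl⟩ := hyz
  exact ⟨m + n, Function.iterate_add_apply ..⟩

theorem Anc.eq_root (h : T.Anc x T.root) : x = T.root := by
  obtain ⟨n, rfl⟩ := h
  exact Function.iterate_fixed T.parent_root n

theorem Anc.parent_of_ne (h : T.Anc x v) (hne : x ≠ v) : T.Anc x (T.parent v) := by
  obtain ⟨_ | n, hn⟩ := h
  · exact absurd hn.symm hne
  · exact ⟨n, hn⟩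

theorem parent_ne (hv : v ≠ T.root) : T.parent v ≠ v := by
  intro hfix
  obtain ⟨n, hn⟩ := T.reaches_root v
  exact hv ((Function.iterate_fixed hfix n).symm.trans hn)

theorem induction_on {motive : V → Prop} (T : ParentTree V) (v : V) (root : motive T.root)
    (parent : ∀ v, v ≠ T.root → motive (T.parent v) → motive v) : motive v := by
  obtain ⟨n, hn⟩ := T.reaches_root v
  induction n generalizing v with
  | zero =>
    obtain rfl : v = T.root := hn
    exact root
  | succ n ih =>
    by_cases hv : v = T.root
    · exact hv ▸ root
    · exact parent v hv (ih (T.parent v) hn)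

theorem Anc.eq_or_exists_child (h : T.Anc x v) :
    x = v ∨ ∃ c, c ≠ T.root ∧ T.parent c = x ∧ T.Anc c v := by
  induction v using T.induction_on with
  | root => exact Or.inl h.eq_root
  | parent v hv ih =>
    by_cases hxv : x = v
    · exact Or.inl hxv
    rcases ih (h.parent_of_ne hxv) with rfl | ⟨c, hc, hcx, hcv⟩
    · exact Or.inr ⟨v, hv, rfl, T.anc_refl v⟩
    · exact Or.inr ⟨c, hc, hcx, hcv.trans (T.anc_parent v)⟩

end ParentTree

section DominatorTree

variable {G : FlowGraph V} {T : ParentTree V} {u v x w : V}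

theorem ParentProperty.domOn_of_anc (hP : ParentProperty G T) (hroot : T.root = G.s)
    (h : T.Anc x w) : DomOn G.A G.s x w := by
  intro p hp
  induction hp using IsWalk.concat_induction with
  | singleton =>
    rw [← hroot] at h ⊢
    exact List.mem_singleton.2 h.eq_root
  | @concat v w p _ hvw ih =>
    by_cases hxw : x = w
    · simp [hxw]
    · exact List.mem_append_left _ (ih ((h.parent_of_ne hxw).trans (hP v w hvw)))

theorem ParentProperty.anc_of_domOn (hP : ParentProperty G T) (hS : SiblingProperty G T)
    (hroot : T.root = G.s) (h : DomOn G.A G.s u v) : T.Anc u v := by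
  induction u using T.induction_on with
  | root => exact T.reaches_root v
  | parent u hu ih =>
    have hparent : DomOn G.A G.s (T.parent u) u := hP.domOn_of_anc hroot (T.anc_parent u)
    rcases (ih (hparent.trans h)).eq_or_exists_child with rfl | ⟨c, hc, hcu, hcv⟩
    · exact ⟨0, hparent.antisymm (G.reach u) h⟩
    · suffices c = u from this ▸ hcv
      by_contra hne
      rcases (hP.domOn_of_anc hroot hcv).total (G.reach v) h with hdom | hdom
      · exact hS c u hc hu hne hcu hdom
      · exact hS u c hu hc (Ne.symm hne) hcu.symm hdom

theorem ParentProperty.isDomTree (hP : ParentProperty G T) (hS : SiblingProperty G T)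
    (hroot : T.root = G.s) : IsDomTree G T := by
  refine ⟨hroot, fun v hv => ⟨hP.domOn_of_anc hroot (T.anc_parent v), ?_, fun u hu hne => ?_⟩⟩
  · exact T.parent_ne (hroot ▸ hv)
  · exact hP.domOn_of_anc hroot ((hP.anc_of_domOn hS hroot hu).parent_of_ne hne)

theorem IsDomTreeOn.anc_of_domOn {A : V → V → Prop} {s : V} (hT : IsDomTreeOn A s T)
    (h : DomOn A s x v) : T.Anc x v := by
  obtain ⟨rfl, hidom⟩ := hT
  induction v using T.induction_on with
  | root => exact h.eq_start ▸ T.anc_refl T.root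
  | parent v hv ih =>
    by_cases hxv : x = v
    · exact hxv ▸ T.anc_refl v
    · exact (ih ((hidom v hv).2.2 x h hxv)).trans (T.anc_parent v)

theorem IsDomTree.parentProperty (hT : IsDomTree G T) : ParentProperty G T := by
  intro v w hvw
  have hw : w ≠ G.s := fun h => G.no_enter v (h ▸ hvw)
  obtain ⟨hdom, hne, -⟩ := hT.2 w hw
  exact hT.anc_of_domOn (hdom.of_arc hne hvw)

theorem IsDomTree.siblingProperty (hT : IsDomTree G T) : SiblingProperty G T := by
  obtain ⟨hroot, hidom⟩ := hT
  intro v w hv hw hne hparent hvw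
  obtain ⟨hdom, hparent_ne, -⟩ := hidom v (hroot ▸ hv)
  have hv_parent : DomOn G.A G.s v (T.parent v) :=
    hparent ▸ (hidom w (hroot ▸ hw)).2.2 v hvw hne
  exact hparent_ne (hdom.antisymm (G.reach v) hv_parent)

end DominatorTree

theorem stmt4_general (G : FlowGraph V) (T : ParentTree V) (hroot : T.root = G.s) :
    (ParentProperty G T ∧ SiblingProperty G T) ↔ IsDomTree G T :=
  ⟨fun ⟨hP, hS⟩ => hP.isDomTree hS hroot, fun hT => ⟨hT.parentProperty, hT.siblingProperty⟩⟩

/-- A rooted tree on the vertex set of a flow graph `G` has both the parent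
property and the sibling property if and only if it is the dominator tree of
`G`. -/
theorem stmt4 [Fintype V] (G : FlowGraph V) (T : ParentTree V)
    (hroot : T.root = G.s) :
    (ParentProperty G T ∧ SiblingProperty G T) ↔ IsDomTree G T :=
  stmt4_general G T hroot
end

section
/- Let T be a rooted tree on the vertex set of a flow graph G that has the parent property, and let S be the vertex set of a strongly connected subgraph of G. Then either S = {s}, or there exist a vertex x and a nonempty set W of children of x in T such that W ⊆ S and every vertex of S is a descendant in T of some member of W (that is, S consists of a set of siblings in T and possibly some of their descendants in T). -/
variable {V : Type*}

/-! Choose `w₀ ∈ S` whose parent `x` has least depth, and follow an arc `(v, u)` inside `S`, where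
`v` descends from a child `w ∈ S` of `x`. By the parent property `t(u)` and `w` are both ancestors
of `v`, hence comparable: either `u` descends from `w`, or `t(u)` is an ancestor of `x`, and then
`t(u) = x` by the choice of `w₀`, so that `u` is itself a child of `x` in `S`. Since `w₀` reaches
all of `S` inside `S`, every vertex of `S` descends from a child of `x` in `S`. If `s ∈ S`, then
`S = {s}` because no arc enters `s`. -/

section Walk

variable {A : V → V → Prop} {S : Set V} {P : V → Prop} {u v : V}

theorem IsWalk.induction {p : List V} (hp : IsWalk A u v p) (hu : P u)
    (step : ∀ a ∈ p, ∀ b ∈ p, A a b → P a → P b) : P v := by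
  obtain ⟨hchain, hhead, hlast⟩ := hp
  have hchain_mem : p.IsChain fun a b => (a ∈ p ∧ b ∈ p) ∧ A a b :=
    hchain.imp_of_mem_imp fun a b ha hb hab => ⟨⟨ha, hb⟩, hab⟩
  refine hchain_mem.induction P p (fun a b hab => step a hab.1.1 b hab.1.2 hab.2) ?_ v
    (List.mem_of_getLast? hlast)
  intro hne
  rwa [← Option.some_inj.1 (hhead.symm.trans (List.head?_eq_some_head hne))]

theorem StronglyConnectedSet.induction (hS : StronglyConnectedSet A S) (hu : u ∈ S) (hPu : P u)
    (step : ∀ a ∈ S, ∀ b ∈ S, A a b → P a → P b) : ∀ v ∈ S, P v := by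
  intro v hv
  obtain ⟨p, hp, hpS⟩ := hS.2 u hu v hv
  exact hp.induction hPu fun a ha b hb => step a (hpS a ha) b (hpS b hb)

theorem StronglyConnectedSet.eq_singleton_of_forall_not_arc (hS : StronglyConnectedSet A S)
    (hu : u ∈ S) (hA : ∀ v ∈ S, ¬ A v u) : S = {u} := by
  refine Set.eq_singleton_iff_unique_mem.2 ⟨hu, fun y hy => ?_⟩
  by_contra hne
  exact hS.induction (P := (· ≠ u)) hy hne (fun a ha b _ hab _ hbu => hA a ha (hbu ▸ hab)) u hu rfl

end Walk

namespace ParentTree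

variable {T : ParentTree V} {u v w x y : V}

namespace Anc

theorem refl (x : V) : T.Anc x x := ⟨0, rfl⟩

theorem of_parent : T.Anc x (T.parent y) → T.Anc x y
  | ⟨n, hn⟩ => ⟨n + 1, hn⟩

theorem eq_or_anc_parent : T.Anc x y → x = y ∨ T.Anc x (T.parent y)
  | ⟨0, h⟩ => .inl h.symm
  | ⟨n + 1, h⟩ => .inr ⟨n, h⟩

theorem total (hx : T.Anc x v) (hy : T.Anc y v) : T.Anc x y ∨ T.Anc y x := by
  obtain ⟨m, rfl⟩ := hx
  obtain ⟨n, rfl⟩ := hy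
  rcases le_total m n with hmn | hnm
  · exact .inr ⟨n - m, by rw [← Function.iterate_add_apply, Nat.sub_add_cancel hmn]⟩
  · exact .inl ⟨m - n, by rw [← Function.iterate_add_apply, Nat.sub_add_cancel hnm]⟩

theorem anc_or_parent_anc_parent (hw : T.Anc w v) (hu : T.Anc (T.parent u) v) :
    T.Anc w u ∨ T.Anc (T.parent u) (T.parent w) := by
  rcases hw.total hu with hwu | huw
  · exact .inl hwu.of_parent
  · rcases huw.eq_or_anc_parent with rfl | huw'
    · exact .inl (refl _).of_parent
    · exact .inr huw'

end Anc

open Classical in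
/-- The depth of `v` in `T`, encoded as the least number of parent steps that leads from `v` to the
root. It serves to choose a highest vertex of a set and to identify an ancestor of equal depth. -/
noncomputable def depth (T : ParentTree V) (v : V) : ℕ := Nat.find (T.reaches_root v)

theorem depth_eq_zero_iff : T.depth v = 0 ↔ v = T.root := by
  classical exact Nat.find_eq_zero _

theorem depth_parent (T : ParentTree V) (v : V) : T.depth (T.parent v) = T.depth v - 1 := by
  classical
  by_cases hv : v = T.root
  · rw [hv, T.parent_root, depth_eq_zero_iff.2 rfl]
  · have hsucc : T.depth v = T.depth (T.parent v) + 1 :=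
      Nat.find_comp_succ (T.reaches_root v) (T.reaches_root (T.parent v)) hv
    omega

theorem depth_iterate_parent (T : ParentTree V) (n : ℕ) (v : V) :
    T.depth (T.parent^[n] v) = T.depth v - n := by
  induction n with
  | zero => rfl
  | succ n ih => rw [Function.iterate_succ_apply', depth_parent, ih, Nat.sub_sub]

theorem Anc.eq_of_depth_le (hxy : T.Anc x y) (hle : T.depth y ≤ T.depth x) : x = y := by
  obtain ⟨n, rfl⟩ := hxy
  rw [depth_iterate_parent] at hle
  obtain rfl | hy : n = 0 ∨ T.depth y = 0 := by omega
  · rfl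
  · rw [depth_eq_zero_iff.1 hy, Function.iterate_fixed T.parent_root]

end ParentTree

/-- The parent property of `T` for an arbitrary arc relation `A`, which extends it from flow graphs
to all digraphs; `ParentProperty G` is definitionally the case `A = G.A`. -/
def ParentPropertyOn (A : V → V → Prop) (T : ParentTree V) : Prop :=
  ∀ v w : V, A v w → T.Anc (T.parent w) v

theorem StronglyConnectedSet.exists_forall_exists_sibling_anc {A : V → V → Prop}
    {T : ParentTree V} {S : Set V} (hS : StronglyConnectedSet A S) (hpp : ParentPropertyOn A T) :
    ∃ w₀ ∈ S, ∀ y ∈ S, ∃ w ∈ S, T.parent w = T.parent w₀ ∧ T.Anc w y := by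
  obtain ⟨w₀, hw₀, hmin⟩ : ∃ w₀ ∈ S, ∀ u ∈ S, T.depth (T.parent w₀) ≤ T.depth (T.parent u) :=
    ⟨_, Function.argminOn_mem _ S hS.1,
      fun _ hu => Function.argminOn_le (fun u => T.depth (T.parent u)) S hu⟩
  refine ⟨w₀, hw₀, hS.induction hw₀ ⟨w₀, hw₀, rfl, .refl w₀⟩ ?_⟩
  rintro v - u hu hvu ⟨w, hw, hparent, hwv⟩
  rcases hwv.anc_or_parent_anc_parent (hpp v u hvu) with hwu | huw
  · exact ⟨w, hw, hparent, hwu⟩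
  · rw [hparent] at huw
    exact ⟨u, hu, huw.eq_of_depth_le (hmin u hu), .refl u⟩

theorem stmt8_general (A : V → V → Prop) (T : ParentTree V) (no_enter : ∀ v, ¬ A v T.root)
    (hpp : ParentPropertyOn A T) (S : Set V) (hS : StronglyConnectedSet A S) :
    S = {T.root} ∨
    ∃ (x : V) (W : Set V), W.Nonempty ∧ W ⊆ S ∧
      (∀ w ∈ W, w ≠ T.root ∧ T.parent w = x) ∧
      ∀ y ∈ S, ∃ w ∈ W, T.Anc w y := by
  by_cases hmem : T.root ∈ S
  · exact .inl (hS.eq_singleton_of_forall_not_arc hmem fun v _ => no_enter v)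
  · obtain ⟨w₀, hw₀, hanc⟩ := hS.exists_forall_exists_sibling_anc hpp
    refine .inr ⟨T.parent w₀, {w ∈ S | T.parent w = T.parent w₀}, ⟨w₀, hw₀, rfl⟩,
      Set.sep_subset _ _, fun w hw => ⟨ne_of_mem_of_not_mem hw.1 hmem, hw.2⟩, fun y hy => ?_⟩
    obtain ⟨w, hw, hparent, hwy⟩ := hanc y hy
    exact ⟨w, ⟨hw, hparent⟩, hwy⟩

/-- If `T` has the parent property and `S` is the vertex set of a strongly
connected subgraph of `G`, then either `S = {s}` or `S` consists of a nonempty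
set `W` of children of some vertex `x` in `T` together with, possibly, some of
their descendants. -/
theorem stmt8 [Fintype V] (G : FlowGraph V) (T : ParentTree V)
    (hroot : T.root = G.s) (hpp : ParentProperty G T)
    (S : Set V) (hS : StronglyConnectedSet G.A S) :
    S = {G.s} ∨
    ∃ (x : V) (W : Set V), W.Nonempty ∧ W ⊆ S ∧
      (∀ w ∈ W, w ≠ T.root ∧ T.parent w = x) ∧
      ∀ y ∈ S, ∃ w ∈ W, T.Anc w y := by
  exact hroot ▸ stmt8_general G.A T (fun v => hroot ▸ G.no_enter v) hpp S hS
end
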